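/- Torsion-generated HNN embedding: Let p ≥ 5 be an integer. Then every countable group B embeds as a subgroup of a group W that is generated by two elements each of order exactly p. -/

import Mathlib

/-!
If the supports of two functions into a group meet in a single point, their commutator is
supported at that point. In a wreath product this isolates a commutator in one coordinate.

Following Higman, Neumann and Neumann, `B ≀ᵣ ℤ` expresses every `b : B`, placed in one coordinate,
as a commutator `⁅c b, d⁆` with `d` independent of `b`. In a second wreath product with `ℤ`, a
single function `F` stores `d` and all the `c b` along a sum-free set of positions, so that
commutators of `F` with its translates recover every `⁅c b, d⁆`. Hence `B` embeds in the derived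
subgroup of some `⟨t, f⟩`.

Next let `q` have order `p`, and conjugate it in `⟨t, f⟩ ≀ᵣ ⟨q⟩` by the function taking the values
`f` at `1` and `t⁻¹` at `q`. The quotient of the two conjugates is a function `u` supported on
`{1, q, q²}` with `u 1 = f` and `u (q²) = t`. Its translate by `q⁻²` has value `t` at `1`, and,
because `p ≥ 5`, the two supports meet only at `1`. So the subgroup generated by the two conjugates
contains `⁅t, f⁆` in the coordinate `1`, hence the whole derived subgroup of `⟨t, f⟩`.
-/

universe u v

namespace WreathEmbedding

open Subgroup
open scoped commutatorElement

section Pi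

variable {ι : Type*} {G : ι → Type*} [∀ i, Group (G i)] [DecidableEq ι]

theorem commutatorElement_eq_mulSingle {w z : ∀ i, G i} (i : ι)
    (h : ∀ j, j ≠ i → w j = 1 ∨ z j = 1) : ⁅w, z⁆ = Pi.mulSingle i ⁅w i, z i⁆ := by
  funext j
  change ⁅w j, z j⁆ = _
  rcases eq_or_ne j i with rfl | hj
  · rw [Pi.mulSingle_eq_same]
  · rw [Pi.mulSingle_eq_of_ne hj]
    rcases h j hj with hw | hz
    · rw [hw, commutatorElement_one_left]
    · rw [hz, commutatorElement_one_right]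

theorem mulSingle_conj (w : ∀ i, G i) (i : ι) (g : G i) :
    Pi.mulSingle i (w i * g * (w i)⁻¹) = w * Pi.mulSingle i g * w⁻¹ := by
  funext j
  rcases eq_or_ne j i with rfl | hj
  · simp
  · simp [hj]

theorem map_eval_le_normalizer_comap_mulSingle (V : Subgroup (∀ i, G i)) (i : ι) :
    V.map (Pi.evalMonoidHom G i) ≤ normalizer (V.comap (MonoidHom.mulSingle G i)) := by
  rw [le_normalizer_iff]
  rintro _ ⟨w, hw, rfl⟩ g hg
  change Pi.mulSingle i (w i * g * (w i)⁻¹) ∈ V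
  rw [mulSingle_conj]
  exact V.mul_mem (V.mul_mem hw hg) (V.inv_mem hw)

end Pi

theorem commutator_closure_le {G : Type*} [Group G] {S : Set G} {N : Subgroup G}
    (hS : S ⊆ normalizer (N : Set G)) (hN : ∀ a ∈ S, ∀ b ∈ S, ⁅a, b⁆ ∈ N) :
    ⁅closure S, closure S⁆ ≤ N := by
  have conj_mem {g h : G} (hg : g ∈ closure S) (hh : h ∈ N) : g * h * g⁻¹ ∈ N :=
    (mem_normalizer_iff.1 ((closure_le _).2 hS hg) h).1 hh
  have conj_inv_mem {g h : G} (hg : g ∈ closure S) (hh : h ∈ N) : g⁻¹ * h * g ∈ N := by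
    simpa only [inv_inv] using conj_mem (inv_mem hg) hh
  rw [commutator_le]
  intro a ha b hb
  induction ha, hb using closure_induction₂ with
  | mem a b ha hb => exact hN a ha b hb
  | one_left => simp only [commutatorElement_one_left, one_mem]
  | one_right => simp only [commutatorElement_one_right, one_mem]
  | mul_left a b c ha _ _ hac hbc =>
    rw [commutatorElement_mul_left_eq_conj_mul]
    exact N.mul_mem (conj_mem ha hbc) hac
  | mul_right b c a hb _ _ hab hac =>
    rw [commutatorElement_mul_right_eq_mul_conj, mul_assoc, mul_assoc, ← mul_assoc b]
    exact N.mul_mem hab (conj_mem hb hac)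
  | inv_left a b ha _ hab =>
    rw [commutatorElement_inv_left, ← commutatorElement_inv]
    exact conj_inv_mem ha (N.inv_mem hab)
  | inv_right a b _ hb hab =>
    rw [commutatorElement_inv_right, ← commutatorElement_inv]
    exact conj_inv_mem hb (N.inv_mem hab)

theorem commutator_closure_pair_le {G : Type*} [Group G] {a b : G} {N : Subgroup G}
    (ha : a ∈ normalizer (N : Set G)) (hb : b ∈ normalizer (N : Set G)) (hab : ⁅a, b⁆ ∈ N) :
    ⁅closure {a, b}, closure {a, b}⁆ ≤ N := by
  refine commutator_closure_le (Set.pair_subset ha hb) ?_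
  rintro _ (rfl | rfl) _ (rfl | rfl)
  · simp only [commutatorElement_self, one_mem]
  · exact hab
  · rw [← commutatorElement_inv]
    exact N.inv_mem hab
  · simp only [commutatorElement_self, one_mem]

theorem commutator_closure_pair_le_comap_mulSingle {ι : Type*} {G : ι → Type*}
    [∀ i, Group (G i)] [DecidableEq ι] {V : Subgroup (∀ i, G i)} {w z : ∀ i, G i}
    (hw : w ∈ V) (hz : z ∈ V) (i : ι) (h : ∀ j, j ≠ i → w j = 1 ∨ z j = 1) :
    ⁅closure {w i, z i}, closure {w i, z i}⁆ ≤ V.comap (MonoidHom.mulSingle G i) := by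
  have hV := map_eval_le_normalizer_comap_mulSingle V i
  refine commutator_closure_pair_le (hV ⟨w, hw, rfl⟩) (hV ⟨z, hz, rfl⟩) ?_
  change Pi.mulSingle i ⁅w i, z i⁆ ∈ V
  rw [← commutatorElement_eq_mulSingle i h]
  exact commutator_le.1 V.commutator_le_self w hw z hz

theorem closure_pair_mk_eq_top {G : Type*} [Group G] (x y : G) :
    closure {(⟨x, subset_closure (Set.mem_insert x {y})⟩ : closure {x, y}),
      ⟨y, subset_closure (Set.mem_insert_of_mem x rfl)⟩} = ⊤ := by
  rw [← closure_closure_coe_preimage]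
  congr 1
  ext z
  simp [Subtype.ext_iff]

open RegularWreathProduct

variable {D : Type u} {Q : Type v} [Group D] [Group Q]

/-- The inclusion of the base group `Q → D` in the regular wreath product. Beware that Mathlib's
`RegularWreathProduct.inl` is the inclusion of the other factor, `Q`. -/
def baseHom : (Q → D) →* D ≀ᵣ Q where
  toFun F := ⟨F, 1⟩
  map_one' := rfl
  map_mul' F F' := by ext <;> simp

theorem baseHom_injective : Function.Injective (baseHom : (Q → D) →* D ≀ᵣ Q) :=
  fun _ _ h ↦ congrArg RegularWreathProduct.left h

theorem inl_injective : Function.Injective (inl : Q →* D ≀ᵣ Q) :=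
  fun _ _ h ↦ congrArg RegularWreathProduct.right h

theorem inl_conj_baseHom (q : Q) (F : Q → D) :
    (inl q : D ≀ᵣ Q) * baseHom F * (inl q)⁻¹ = baseHom fun i ↦ F (q⁻¹ * i) := by
  ext <;> simp [baseHom]

theorem commutatorElement_baseHom_inl (F : Q → D) (q : Q) :
    ⁅(baseHom F : D ≀ᵣ Q), inl q⁆ = baseHom fun i ↦ F i * (F (q⁻¹ * i))⁻¹ :=
  calc ⁅(baseHom F : D ≀ᵣ Q), inl q⁆
      = baseHom F * (inl q * baseHom F * (inl q)⁻¹)⁻¹ := by group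
    _ = baseHom fun i ↦ F i * (F (q⁻¹ * i))⁻¹ := by
        rw [inl_conj_baseHom, ← map_inv, ← map_mul]
        rfl

theorem exists_commutatorElement_inl_eq_baseHom {q : Q} (hq : q ^ 2 ≠ 1) (t f : D) :
    ∃ K u : Q → D, ⁅(baseHom K : D ≀ᵣ Q), inl q⁆ = baseHom u ∧ u 1 = f ∧ u (q ^ 2) = t ∧
      ∀ i ∉ ({1, q, q ^ 2} : Set Q), u i = 1 := by
  classical
  have q_ne_one : q ≠ 1 := fun h ↦ hq (by rw [h, one_pow])
  have inv_ne : q⁻¹ ≠ q := fun h ↦ hq (by rw [sq, ← inv_eq_iff_mul_eq_one, h])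
  have sq_ne : q ^ 2 ≠ q := fun h ↦ q_ne_one (by rwa [sq, mul_eq_left] at h)
  have inv_mul_sq : q⁻¹ * q ^ 2 = q := by rw [sq, inv_mul_cancel_left]
  refine ⟨Pi.mulSingle 1 f * Pi.mulSingle q t⁻¹, _,
    commutatorElement_baseHom_inl _ q, ?_, ?_, fun i hi ↦ ?_⟩
  · simp [q_ne_one, q_ne_one.symm, inv_ne]
  · simp [inv_mul_sq, hq, sq_ne, q_ne_one]
  · simp only [Set.mem_insert_iff, Set.mem_singleton_iff, not_or] at hi
    obtain ⟨hi_one, hi_q, hi_sq⟩ := hi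
    have inv_mul_ne_one : q⁻¹ * i ≠ 1 := fun h ↦ hi_q (inv_mul_eq_one.1 h).symm
    have inv_mul_ne : q⁻¹ * i ≠ q := fun h ↦ hi_sq (by rw [sq, ← inv_mul_eq_iff_eq_mul, h])
    simp [hi_one, hi_q, inv_mul_ne_one, inv_mul_ne]

theorem sq_mul_notMem {q i : Q} (hq₃ : q ^ 3 ≠ 1) (hq₄ : q ^ 4 ≠ 1) (hi : i ≠ 1)
    (hi_mem : i ∈ ({1, q, q ^ 2} : Set Q)) : q ^ 2 * i ∉ ({1, q, q ^ 2} : Set Q) := by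
  rintro (h | h | h)
  · rcases hi_mem with rfl | rfl | rfl
    · exact hi rfl
    · exact hq₃ (by rwa [← pow_succ] at h)
    · exact hq₄ (by rwa [← pow_add] at h)
  · rcases hi_mem with rfl | rfl | rfl
    · exact hi rfl
    · exact hq₄ (by rw [pow_mul _ 2 2, mul_eq_right.1 h, one_pow])
    · exact hq₃ (by rwa [← pow_add, pow_succ, mul_eq_right] at h)
  · exact hi (mul_eq_left.1 h)

section DecidableEq

variable [DecidableEq Q]

/-- The embedding of `D` in `D ≀ᵣ Q` as the coordinate at `1` of the base group. -/
def singleHom : D →* D ≀ᵣ Q :=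
  baseHom.comp (MonoidHom.mulSingle (fun _ : Q ↦ D) 1)

theorem singleHom_apply (g : D) : (singleHom g : D ≀ᵣ Q) = baseHom (Pi.mulSingle 1 g) := rfl

theorem singleHom_injective : Function.Injective (singleHom : D →* D ≀ᵣ Q) :=
  baseHom_injective.comp (Pi.mulSingle_injective (M := fun _ : Q ↦ D) 1)

theorem exists_commutatorElement_inl_eq_singleHom {q : Q} (hq : ¬IsOfFinOrder q) (b : D) :
    ∃ F : Q → D, ⁅(baseHom F : D ≀ᵣ Q), inl q⁆ = singleHom b := by
  classical
  -- The constant `b` on the ray `1, q, q², …`, which `q` translates into itself, missing only `1`.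
  refine ⟨fun i ↦ if i ∈ Submonoid.powers q then b else 1, ?_⟩
  have inv_notMem : q⁻¹ ∉ Submonoid.powers q := by
    rintro ⟨n, hn : q ^ n = q⁻¹⟩
    refine hq (isOfFinOrder_iff_pow_eq_one.2 ⟨n + 1, n.succ_pos, ?_⟩)
    rw [pow_succ, hn, inv_mul_cancel]
  have shift_mem {i : Q} (hi : i ≠ 1) :
      q⁻¹ * i ∈ Submonoid.powers q ↔ i ∈ Submonoid.powers q := by
    constructor
    · rintro ⟨n, hn : q ^ n = q⁻¹ * i⟩
      exact ⟨n + 1, (pow_succ' q n).trans (eq_inv_mul_iff_mul_eq.1 hn)⟩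
    · rintro ⟨_ | n, rfl⟩
      · exact absurd (pow_zero q) hi
      · exact ⟨n, eq_inv_mul_iff_mul_eq.2 (pow_succ' q n).symm⟩
  rw [commutatorElement_baseHom_inl, singleHom_apply]
  congr 1
  funext i
  rcases eq_or_ne i 1 with rfl | hi
  · simp [inv_notMem, one_mem]
  · simp [shift_mem hi, hi]

theorem exists_commutatorElement_conj_eq_singleHom {ι : Type*} {s : ι → Q}
    (hs : Function.Injective s) (hmul : ∀ a b, s a * s b ∉ insert 1 (Set.range s))
    (c : ι → D) (d : D) :
    ∃ F : Q → D, ∀ a,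
      ⁅(inl (s a)⁻¹ * baseHom F * (inl (s a)⁻¹)⁻¹ : D ≀ᵣ Q), baseHom F⁆ = singleHom ⁅c a, d⁆ := by
  have s_ne_one (a : ι) : s a ≠ 1 := fun h ↦ hmul a a (by simp [h])
  let F : Q → D := Function.update (Function.extend s c 1) 1 d
  have F_one : F 1 = d := Function.update_self ..
  have F_s (a : ι) : F (s a) = c a := by
    simp only [F, Function.update_of_ne (s_ne_one a), hs.extend_apply]
  have F_eq_one {i : Q} (hi : i ∉ insert 1 (Set.range s)) : F i = 1 := by
    obtain ⟨hi_one, hi_range⟩ := not_or.1 hi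
    simp only [F, Function.update_of_ne hi_one, Function.extend_apply' _ _ _ hi_range, Pi.one_apply]
  have disjoint (a : ι) (i : Q) (hi : i ≠ 1) : F (s a * i) = 1 ∨ F i = 1 := by
    by_cases hi_range : i ∈ Set.range s
    · obtain ⟨b, rfl⟩ := hi_range
      exact .inl (F_eq_one (hmul a b))
    · exact .inr (F_eq_one (not_or.2 ⟨hi, hi_range⟩))
  refine ⟨F, fun a ↦ ?_⟩
  rw [inl_conj_baseHom, inv_inv, ← map_commutatorElement, singleHom_apply,
    commutatorElement_eq_mulSingle 1 (disjoint a), mul_one, F_s, F_one]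

theorem exists_singleHom_singleHom_mem_commutator [Countable D] {q : Q} (hq : ¬IsOfFinOrder q) :
    ∃ F : Q → D ≀ᵣ Q, ∀ b : D,
      (singleHom (singleHom b) : (D ≀ᵣ Q) ≀ᵣ Q) ∈
        ⁅closure {inl q, baseHom F}, closure {inl q, baseHom F}⁆ := by
  have pow_injective := injective_pow_iff_not_isOfFinOrder.2 hq
  obtain ⟨e, he⟩ := exists_injective_nat D
  let s (b : D) : Q := q ^ (2 * e b + 1)
  have s_injective : Function.Injective s :=
    fun a b h ↦ he (by have := pow_injective h; omega)
  have s_mul_notMem (a b : D) : s a * s b ∉ insert 1 (Set.range s) := by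
    rw [← pow_add]
    rintro (h | ⟨c, h⟩)
    · have := pow_injective (h.trans (pow_zero q).symm)
      omega
    · have := pow_injective h
      omega
  choose c hc using exists_commutatorElement_inl_eq_singleHom (D := D) hq
  obtain ⟨F, hF⟩ := exists_commutatorElement_conj_eq_singleHom s_injective s_mul_notMem
    (fun b ↦ (baseHom (c b) : D ≀ᵣ Q)) (inl q)
  refine ⟨F, fun b ↦ ?_⟩
  rw [← hc, ← hF]
  set H := closure {(inl q : (D ≀ᵣ Q) ≀ᵣ Q), baseHom F}
  have inl_mem : (inl q : (D ≀ᵣ Q) ≀ᵣ Q) ∈ H := subset_closure (Set.mem_insert _ _)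
  have base_mem : baseHom F ∈ H := subset_closure (Set.mem_insert_of_mem _ rfl)
  have shift_mem : (inl (s b)⁻¹ : (D ≀ᵣ Q) ≀ᵣ Q) ∈ H := by
    rw [map_inv, map_pow]
    exact H.inv_mem (H.pow_mem inl_mem _)
  exact commutator_mem_commutator
    (H.mul_mem (H.mul_mem shift_mem base_mem) (H.inv_mem shift_mem)) base_mem

/-- The hypotheses on `q` say that its order is at least five or infinite. -/
theorem exists_map_singleHom_commutator_le {q : Q} (hq₃ : q ^ 3 ≠ 1) (hq₄ : q ^ 4 ≠ 1)
    (t f : D) :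
    ∃ k : D ≀ᵣ Q, ⁅closure {t, f}, closure {t, f}⁆.map singleHom ≤
      closure {inl q, k * inl q * k⁻¹} := by
  have hq₂ : q ^ 2 ≠ 1 := fun h ↦ hq₄ (by rw [pow_mul q 2 2, h, one_pow])
  obtain ⟨K, u, hu, u_one, u_sq, u_eq_one⟩ := exists_commutatorElement_inl_eq_baseHom hq₂ t f
  refine ⟨baseHom K, ?_⟩
  set W := closure {(inl q : D ≀ᵣ Q), baseHom K * inl q * (baseHom K)⁻¹}
  have inl_mem : inl q ∈ W := subset_closure (Set.mem_insert _ _)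
  have conj_mem : baseHom K * inl q * (baseHom K)⁻¹ ∈ W :=
    subset_closure (Set.mem_insert_of_mem _ rfl)
  have u_mem : u ∈ W.comap baseHom := by
    rw [mem_comap, ← hu]
    exact W.mul_mem conj_mem (W.inv_mem inl_mem)
  let w : Q → D := fun i ↦ u (q ^ 2 * i)
  have w_mem : w ∈ W.comap baseHom := by
    have translate := inl_conj_baseHom (q ^ 2)⁻¹ u
    rw [inv_inv, map_inv, map_pow] at translate
    have sq_mem := W.inv_mem (W.pow_mem inl_mem 2)
    rw [mem_comap, ← translate]
    exact W.mul_mem (W.mul_mem sq_mem u_mem) (W.inv_mem sq_mem)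
  have disjoint (i : Q) (hi : i ≠ 1) : w i = 1 ∨ u i = 1 := by
    by_cases hi_mem : i ∈ ({1, q, q ^ 2} : Set Q)
    · exact .inl (u_eq_one _ (sq_mul_notMem hq₃ hq₄ hi hi_mem))
    · exact .inr (u_eq_one i hi_mem)
  have commutator_le := commutator_closure_pair_le_comap_mulSingle w_mem u_mem 1 disjoint
  rw [show w 1 = t by simp only [w, mul_one, u_sq], u_one, comap_comap] at commutator_le
  exact map_le_iff_le_comap.2 commutator_le

end DecidableEq

theorem exists_embedding_two_generated_of_pow_ne_one (B : Type u) [Group B] [Countable B] {q : Q}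
    (hq₃ : q ^ 3 ≠ 1) (hq₄ : q ^ 4 ≠ 1) :
    ∃ (W : Type (max u v)) (_ : Group W) (x y : W),
      orderOf x = orderOf q ∧ orderOf y = orderOf q ∧ closure {x, y} = ⊤ ∧
      ∃ φ : B →* W, Function.Injective φ := by
  classical
  let z : Multiplicative ℤ := .ofAdd 1
  have z_infinite : ¬IsOfFinOrder z := by
    rw [← orderOf_eq_zero_iff, orderOf_ofAdd_eq_addOrderOf]
    exact addOrderOf_eq_zero_iff.2 (not_isOfFinAddOrder_of_isAddTorsionFree one_ne_zero)
  obtain ⟨F, hF⟩ := exists_singleHom_singleHom_mem_commutator (D := B) z_infinite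
  obtain ⟨k, hk⟩ := exists_map_singleHom_commutator_le hq₃ hq₄ (inl z) (baseHom F)
  let ψ : B →* ((B ≀ᵣ Multiplicative ℤ) ≀ᵣ Multiplicative ℤ) ≀ᵣ Q :=
    singleHom.comp (singleHom.comp singleHom)
  have ψ_injective : Function.Injective ψ :=
    singleHom_injective.comp (singleHom_injective.comp singleHom_injective)
  have orderOf_inl := orderOf_injective inl
    (inl_injective (D := (B ≀ᵣ Multiplicative ℤ) ≀ᵣ Multiplicative ℤ)) q
  refine ⟨_, inferInstance, _, _, ?_, ?_, closure_pair_mk_eq_top (inl q) (k * inl q * k⁻¹),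
    ψ.codRestrict _ fun b ↦ hk ⟨_, hF b, rfl⟩, ?_⟩
  · rw [orderOf_mk, orderOf_inl]
  · rw [orderOf_mk, ← MulAut.conj_apply, MulEquiv.orderOf_eq, orderOf_inl]
  · exact (MonoidHom.injective_codRestrict _ _ _).2 ψ_injective

end WreathEmbedding

/-- As `orderOf` vanishes on elements of infinite order, `p = 0` is the Higman–Neumann–Neumann
theorem for two generators of infinite order. -/
theorem countable_embeds_in_two_generated_of_order_p_general (p : ℕ) (hp : p = 0 ∨ 5 ≤ p)
    (B : Type*) [Group B] [Countable B] :
    ∃ (W : Type) (_ : Group W) (x y : W),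
      orderOf x = p ∧ orderOf y = p ∧
      Subgroup.closure {x, y} = (⊤ : Subgroup W) ∧
      ∃ φ : B →* W, Function.Injective φ := by
  let q := Multiplicative.ofAdd (1 : ZMod p)
  have orderOf_q : orderOf q = p := by
    rw [orderOf_ofAdd_eq_addOrderOf, ZMod.addOrderOf_one]
  have pow_ne_one {n : ℕ} (hn : 0 < n) (hn' : n < 5) : q ^ n ≠ 1 := by
    rw [ne_eq, ← orderOf_dvd_iff_pow_eq_one, orderOf_q]
    intro h
    have := Nat.le_of_dvd hn h
    have := Nat.pos_of_dvd_of_pos h hn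
    omega
  have : Countable (Shrink.{0} B) := (equivShrink.{0} B).symm.injective.countable
  obtain ⟨W, _, x, y, hx, hy, hW, φ, hφ⟩ :=
    WreathEmbedding.exists_embedding_two_generated_of_pow_ne_one (Shrink.{0} B)
      (pow_ne_one (n := 3) (by lia) (by lia)) (pow_ne_one (n := 4) (by lia) (by lia))
  exact ⟨W, _, x, y, hx.trans orderOf_q, hy.trans orderOf_q, hW,
    φ.comp (Shrink.mulEquiv.{0} (α := B)).symm.toMonoidHom,
    hφ.comp (Shrink.mulEquiv.{0} (α := B)).symm.injective⟩

/-- **Torsion-generated HNN embedding**: for every integer `p ≥ 5`, every countable group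
embeds as a subgroup of a group generated by two elements each of order exactly `p`. -/
theorem countable_embeds_in_two_generated_of_order_p (p : ℕ) (hp : 5 ≤ p)
    (B : Type*) [Group B] [Countable B] :
    ∃ (W : Type) (_ : Group W) (x y : W),
      orderOf x = p ∧ orderOf y = p ∧
      Subgroup.closure {x, y} = (⊤ : Subgroup W) ∧
      ∃ φ : B →* W, Function.Injective φ :=
  countable_embeds_in_two_generated_of_order_p_general p (.inr hp) B
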